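/- arXiv:1107.1347 — 2 statements merged into one kernel-verified Lean document; each statement's English description precedes it below -/
import Mathlib

section
/- Let X be a finite alphabet, p : X → ℝ a probability distribution, {ρ_x}_{x∈X} density operators on ℂ^n, Π an orthogonal projector, and {Π_x}_{x∈X} orthogonal projectors on ℂ^n. Suppose that for all x ∈ X: Tr(Π ρ_x) ≥ 1 − ε, Tr(Π_x ρ_x) ≥ 1 − ε, and Π_x ρ_x = ρ_x Π_x, where 0 ≤ ε. Then Σ_{x∈X} p(x) · Tr(Π_x ρ_x Π_x Π) ≥ 1 − 2ε. -/
open Matrix ComplexOrder BigOperators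

theorem Matrix.PosSemidef.trace_mul_projector_re_nonneg {m : Type*} [Fintype m]
    {A P : Matrix m m ℂ} (hA : A.PosSemidef) (hP : P.IsHermitian) (hPP : P * P = P) :
    0 ≤ ((A * P).trace).re := by
  have h := (hA.mul_mul_conjTranspose_same P).trace_nonneg
  rw [hP.eq, Matrix.trace_mul_comm, ← Matrix.mul_assoc, hPP, Matrix.trace_mul_comm] at h
  exact (Complex.le_def.mp h).1

/-- If `Q` is a projector commuting with a positive semidefinite `ρ`, compressing `ρ` by `Q`
lowers its overlap with a projector `P` by at most `Tr ρ - Tr(Q ρ)`. -/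
theorem Matrix.PosSemidef.trace_sandwich_mul_ge {m : Type*} [Fintype m]
    {ρ P Q : Matrix m m ℂ} (hρ : ρ.PosSemidef) (hP : P.IsHermitian) (hPP : P * P = P)
    (hQ : Q.IsHermitian) (hQQ : Q * Q = Q) (hcomm : Q * ρ = ρ * Q) :
    ((P * ρ).trace).re + ((Q * ρ).trace).re - (ρ.trace).re ≤ ((Q * ρ * Q * P).trace).re := by
  classical
  have hcompress : Q * ρ * Q = Q * ρ := by rw [hcomm, Matrix.mul_assoc, hQQ]
  have hcompl : (1 - Q) * ρ * (1 - Q)ᴴ = ρ - Q * ρ := by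
    rw [(Matrix.isHermitian_one.sub hQ).eq]
    simp only [Matrix.sub_mul, Matrix.mul_sub, Matrix.one_mul, Matrix.mul_one, hcompress]
    rw [← hcomm]
    abel
  have hpsd : (ρ - Q * ρ).PosSemidef := hcompl ▸ hρ.mul_mul_conjTranspose_same (1 - Q)
  have h := hpsd.trace_mul_projector_re_nonneg (P := 1 - P) (Matrix.isHermitian_one.sub hP)
    (by simp [Matrix.sub_mul, Matrix.mul_sub, hPP])
  rw [hcompress, Matrix.trace_mul_comm P ρ]
  simp only [Matrix.sub_mul, Matrix.mul_sub, Matrix.mul_one, Matrix.trace_sub,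
    Complex.sub_re] at h
  linarith

/-- Let `p` be a probability distribution on a finite alphabet `X`,
`ρ_x` density operators, `Π` and `Π_x` orthogonal projectors with
`Tr(Π ρ_x) ≥ 1 − ε`, `Tr(Π_x ρ_x) ≥ 1 − ε`, and `Π_x ρ_x = ρ_x Π_x` for all `x`,
where `ε ≥ 0`.  Then `Σ_x p(x) Tr(Π_x ρ_x Π_x Π) ≥ 1 − 2ε`. -/
theorem avg_sandwiched_overlap {n : ℕ} {X : Type*} [Fintype X]
    (p : X → ℝ) (hp : ∀ x, 0 ≤ p x) (hpsum : ∑ x, p x = 1)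
    (ρx : X → Matrix (Fin n) (Fin n) ℂ)
    (hρx : ∀ x, (ρx x).PosSemidef ∧ (ρx x).trace = 1)
    (P : Matrix (Fin n) (Fin n) ℂ)
    (hP : P.IsHermitian ∧ P * P = P)
    (Px : X → Matrix (Fin n) (Fin n) ℂ)
    (hPx : ∀ x, (Px x).IsHermitian ∧ Px x * Px x = Px x)
    (ε : ℝ) (hε : 0 ≤ ε)
    (h1 : ∀ x, 1 - ε ≤ ((P * ρx x).trace).re)
    (h2 : ∀ x, 1 - ε ≤ ((Px x * ρx x).trace).re)
    (h5 : ∀ x, Px x * ρx x = ρx x * Px x) :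
    1 - 2 * ε ≤ ∑ x, p x * ((Px x * ρx x * Px x * P).trace).re := by
  calc 1 - 2 * ε = ∑ x, p x * (1 - 2 * ε) := by rw [← Finset.sum_mul, hpsum, one_mul]
    _ ≤ ∑ x, p x * ((Px x * ρx x * Px x * P).trace).re := by
      refine Finset.sum_le_sum fun x _ => mul_le_mul_of_nonneg_left ?_ (hp x)
      have h := (hρx x).1.trace_sandwich_mul_ge hP.1 hP.2 (hPx x).1 (hPx x).2 (h5 x)
      rw [(hρx x).2, Complex.one_re] at h
      linarith [h1 x, h2 x]
end

section
/- Symplectic eigenvalues of the Alice–receiver covariance matrix: Let η ∈ [0,1] and N_a, N_b ≥ 0 be real numbers. Let V^{AC} be the real 4×4 matrix with rows (2N_a+1, 0, 2√η·√(N_a(N_a+1)), 0), (0, 2N_a+1, 0, −2√η·√(N_a(N_a+1))), (2√η·√(N_a(N_a+1)), 0, 2(ηN_a+(1−η)N_b)+1, 0), (0, −2√η·√(N_a(N_a+1)), 0, 2(ηN_a+(1−η)N_b)+1), and let J be the block-diagonal 4×4 matrix with two diagonal blocks equal to [[0,1],[−1,0]]. Then the characteristic polynomial of J·V^{AC} equals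 (X² + (λ_{AC}^+)²)·(X² + (λ_{AC}^−)²), where λ_{AC}^± = (1−η)|N_a − N_b| ± √((1−η)²(N_a − N_b)² + 2(1−η)(2N_aN_b + N_a + N_b) + 1); equivalently, the eigenvalues of i·J·V^{AC} are λ_{AC}^+, −λ_{AC}^+, λ_{AC}^−, −λ_{AC}^−. -/
open Matrix Polynomial

/-- The characteristic polynomial of `J·V` for a two-mode covariance matrix in standard form with
local variances `a`, `b` and correlations `s`, `-s`. -/
lemma charpoly_symplecticForm_mul_standardForm {R : Type*} [CommRing R] (a b s : R) :
    ((!![0, 1, 0, 0; -1, 0, 0, 0; 0, 0, 0, 1; 0, 0, -1, 0] : Matrix (Fin 4) (Fin 4) R) *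
      !![a, 0, s, 0; 0, a, 0, -s; s, 0, b, 0; 0, -s, 0, b]).charpoly =
      X ^ 4 + C (a ^ 2 + b ^ 2 - 2 * s ^ 2) * X ^ 2 + C ((a * b - s ^ 2) ^ 2) := by
  have hJV : (!![0, 1, 0, 0; -1, 0, 0, 0; 0, 0, 0, 1; 0, 0, -1, 0] : Matrix (Fin 4) (Fin 4) R) *
      !![a, 0, s, 0; 0, a, 0, -s; s, 0, b, 0; 0, -s, 0, b] =
      !![0, a, 0, -s; -a, 0, -s, 0; 0, -s, 0, b; -s, 0, -b, 0] := by
    ext i j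
    fin_cases i <;> fin_cases j <;> simp [Matrix.mul_apply, Fin.sum_univ_four]
  have hchar : (!![0, a, 0, -s; -a, 0, -s, 0; 0, -s, 0, b; -s, 0, -b, 0] :
      Matrix (Fin 4) (Fin 4) R).charmatrix =
      !![X, -C a, 0, C s; C a, X, C s, 0; 0, C s, X, -C b; C s, 0, C b, X] := by
    ext1 i j
    fin_cases i <;> fin_cases j <;> simp
  rw [hJV, Matrix.charpoly, hchar, Matrix.det_succ_row_zero]
  simp [Fin.sum_univ_four, Matrix.det_fin_three, Fin.succAbove, show (C 2 : R[X]) = 2 from rfl]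
  ring

/-- Symplectic eigenvalues of the Alice–receiver covariance matrix:
for `η ∈ [0,1]` and `N_a, N_b ≥ 0`, the characteristic polynomial of `J·V^{AC}` equals
`(X² + (λ_{AC}^+)²)(X² + (λ_{AC}^−)²)`, where
`λ_{AC}^± = (1−η)|N_a−N_b| ± √((1−η)²(N_a−N_b)² + 2(1−η)(2N_aN_b+N_a+N_b) + 1)`. -/
theorem symplectic_eigenvalues_AC (η Na Nb : ℝ)
    (hη : 0 ≤ η) (hη' : η ≤ 1) (hNa : 0 ≤ Na) (hNb : 0 ≤ Nb) :
    let s : ℝ := 2 * Real.sqrt η * Real.sqrt (Na * (Na + 1))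
    let VAC : Matrix (Fin 4) (Fin 4) ℝ :=
      !![2 * Na + 1, 0, s, 0;
         0, 2 * Na + 1, 0, -s;
         s, 0, 2 * (η * Na + (1 - η) * Nb) + 1, 0;
         0, -s, 0, 2 * (η * Na + (1 - η) * Nb) + 1]
    let J : Matrix (Fin 4) (Fin 4) ℝ :=
      !![0, 1, 0, 0;
         -1, 0, 0, 0;
         0, 0, 0, 1;
         0, 0, -1, 0]
    let lp : ℝ := (1 - η) * |Na - Nb| +
      Real.sqrt ((1 - η) ^ 2 * (Na - Nb) ^ 2 + 2 * (1 - η) * (2 * Na * Nb + Na + Nb) + 1)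
    let lm : ℝ := (1 - η) * |Na - Nb| -
      Real.sqrt ((1 - η) ^ 2 * (Na - Nb) ^ 2 + 2 * (1 - η) * (2 * Na * Nb + Na + Nb) + 1)
    (J * VAC).charpoly = (X ^ 2 + C (lp ^ 2)) * (X ^ 2 + C (lm ^ 2)) := by
  intro s VAC J lp lm
  have hs : s ^ 2 = 4 * η * (Na * (Na + 1)) := by
    simp only [s, mul_pow, Real.sq_sqrt hη, Real.sq_sqrt (show 0 ≤ Na * (Na + 1) by positivity)]
    ring
  have h1η : 0 ≤ 1 - η := sub_nonneg.mpr hη'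
  have hD : √((1 - η) ^ 2 * (Na - Nb) ^ 2 + 2 * (1 - η) * (2 * Na * Nb + Na + Nb) + 1) ^ 2 =
      (1 - η) ^ 2 * (Na - Nb) ^ 2 + 2 * (1 - η) * (2 * Na * Nb + Na + Nb) + 1 :=
    Real.sq_sqrt (by positivity)
  have habs : |Na - Nb| ^ 2 = (Na - Nb) ^ 2 := sq_abs _
  have hsum : lp ^ 2 + lm ^ 2 =
      (2 * Na + 1) ^ 2 + (2 * (η * Na + (1 - η) * Nb) + 1) ^ 2 - 2 * s ^ 2 := by
    simp only [lp, lm]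
    linear_combination 2 * hD + 2 * (1 - η) ^ 2 * habs + 2 * hs
  have hprod : -(lp * lm) = (2 * Na + 1) * (2 * (η * Na + (1 - η) * Nb) + 1) - s ^ 2 := by
    simp only [lp, lm]
    linear_combination hD + hs - (1 - η) ^ 2 * habs
  rw [charpoly_symplecticForm_mul_standardForm, ← hsum, ← hprod]
  simp only [map_add, map_neg, map_mul, map_pow]
  ring
end
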